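/- If P satisfies a margin condition with radius r_0, then the set M of optimal codebooks is finite. -/

import Mathlib

open MeasureTheory Metric

noncomputable section

variable {H : Type*} [NormedAddCommGroup H] [InnerProductSpace ℝ H] [MeasurableSpace H]

/-- `qgamma k c x = min_j ‖x - c j‖²`. -/
def qgamma (k : ℕ) (c : Fin k → H) (x : H) : ℝ := ⨅ j : Fin k, ‖x - c j‖ ^ 2

/-- distortion (risk) of a codebook. -/
def qrisk (k : ℕ) (P : Measure H) (c : Fin k → H) : ℝ := ∫ x, qgamma k c x ∂P

/-- the set of optimal codebooks. -/
def qopt (k : ℕ) (P : Measure H) : Set (Fin k → H) :=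
  {c | ∀ c' : Fin k → H, qrisk k P c ≤ qrisk k P c'}

/-- the `i`-th (closed) Voronoi cell of the codebook `c`. -/
def vcell (k : ℕ) (c : Fin k → H) (i : Fin k) : Set H :=
  {x | ∀ j : Fin k, ‖x - c i‖ ≤ ‖x - c j‖}

/-- `B`, the minimal separation between code points of optimal codebooks. -/
def qB (k : ℕ) (P : Measure H) : ℝ :=
  sInf {b | ∃ c ∈ qopt k P, ∃ i j : Fin k, i ≠ j ∧ b = ‖c i - c j‖}

/-- `p_min`, the minimal mass of a Voronoi cell of an optimal codebook. -/
def qpmin (k : ℕ) (P : Measure H) : ℝ :=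
  sInf {p | ∃ c ∈ qopt k P, ∃ i : Fin k, p = (P (vcell k c i)).toReal}

/-- `N_{c*}`, the union of the boundaries between Voronoi cells. -/
def nbd (k : ℕ) (c : Fin k → H) : Set H :=
  ⋃ (i : Fin k) (j : Fin k) (_ : i ≠ j), vcell k c i ∩ vcell k c j

/-- the weight function `p(t)`, the maximal mass of the closed `t`-neighborhood
of `N_{c*}` over optimal codebooks `c*`. -/
def pweight (k : ℕ) (P : Measure H) (t : ℝ) : ℝ :=
  sSup {p | ∃ c ∈ qopt k P, p = (P (cthickening t (nbd k c))).toReal}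

/-- `P` is `M`-bounded: its support is contained in the closed ball `B(0,M)`. -/
def mbounded (P : Measure H) (M : ℝ) : Prop := P (closedBall (0 : H) M)ᶜ = 0

/-- the support of `P` contains more than `k` points. -/
def suppGT (P : Measure H) (k : ℕ) : Prop :=
  ∀ S : Finset H, S.card ≤ k → P ((S : Set H)ᶜ) ≠ 0

/-- the margin condition with radius `r0`. -/
def margin (k : ℕ) (P : Measure H) (M r0 : ℝ) : Prop :=
  0 < r0 ∧ mbounded P M ∧
    ∀ t : ℝ, 0 ≤ t → t ≤ r0 → pweight k P t ≤ qB k P * qpmin k P * t / (128 * M ^ 2)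

/-!
Every code point of an optimal codebook is the barycenter of its Voronoi cell, so moving an
optimal `c` to `c'` with the cells of `c` kept fixed costs exactly `∑ P(V_i(c)) ‖c_i - c'_i‖²`.
Letting each point choose its nearest code point of `c'` instead saves something only for points
changing index; with `δ` the distance of `c` and `c'`, these lie within `4 M δ / B` of the
boundaries of the cells of `c` and save at most `8 M δ` each. The margin condition makes this
saving smaller than the cost when `δ` is small, so two distinct optimal codebooks are a fixed
distance apart.

An optimal codebook with two almost equal code points, or with a cell of small mass, could be
improved by moving a superfluous code point to a point of the support far from the codebook. Hence
`B` and `p_min` are positive, and since the barycenters of cells of mass at least `p_min` form a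
totally bounded set, so do the optimal codebooks. A totally bounded separated set is finite.
-/

open scoped InnerProductSpace

section Metric

lemma totallyBounded_univ_pi {ι : Type*} {X : ι → Type*} [∀ i, UniformSpace (X i)]
    {s : ∀ i, Set (X i)} (hs : ∀ i, TotallyBounded (s i)) :
    TotallyBounded (Set.univ.pi s) := by
  rcases isEmpty_or_nonempty ι with hι | hι
  · exact (Set.toFinite _).totallyBounded
  · refine totallyBounded_iff_ultrafilter.2 fun f hf => (cauchy_pi_iff X).2 fun i => ?_
    refine totallyBounded_iff_ultrafilter.1 (hs i) (f.map (Function.eval i)) ?_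
    have hmem : Set.univ.pi s ⊆ Function.eval i ⁻¹' s i := fun x hx => hx i (Set.mem_univ i)
    exact Filter.le_principal_iff.2
      (Ultrafilter.mem_map.2 (Filter.mem_of_superset (Filter.le_principal_iff.1 hf) hmem))

lemma totallyBounded_of_forall_exists_dist_lt {X : Type*} [PseudoMetricSpace X] {s : Set X}
    (hs : ∀ ε > 0, ∃ t, TotallyBounded t ∧ ∀ x ∈ s, ∃ y ∈ t, dist x y < ε) :
    TotallyBounded s := by
  refine Metric.totallyBounded_iff.2 fun ε hε => ?_
  obtain ⟨t, ht, hst⟩ := hs (ε / 2) (half_pos hε)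
  obtain ⟨u, hufin, htu⟩ := Metric.totallyBounded_iff.1 ht (ε / 2) (half_pos hε)
  refine ⟨u, hufin, fun x hx => ?_⟩
  obtain ⟨y, hy, hxy⟩ := hst x hx
  obtain ⟨z, hz, hyz⟩ := Set.mem_iUnion₂.1 (htu hy)
  refine Set.mem_iUnion₂.2 ⟨z, hz, (dist_triangle x y z).trans_lt ?_⟩
  linarith [mem_ball.1 hyz]

lemma finite_of_totallyBounded_of_eq_of_dist_lt {X : Type*} [PseudoMetricSpace X] {s : Set X}
    {ε : ℝ} (hε : 0 < ε) (hs : TotallyBounded s)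
    (hsep : ∀ x ∈ s, ∀ y ∈ s, dist x y < ε → x = y) : s.Finite := by
  obtain ⟨t, hts, htfin, hcover⟩ := finite_approx_of_totallyBounded hs ε hε
  refine htfin.subset fun x hx => ?_
  obtain ⟨y, hy, hxy⟩ := Set.mem_iUnion₂.1 (hcover hx)
  exact hsep x hx y (hts hy) hxy ▸ hy

-- Two points of `T` sharing a nearest point `d l` would be closer than the minimal spacing of `T`.
lemma exists_pos_forall_exists_le_dist {X ι : Type*} [MetricSpace X] [Fintype ι]
    {T : Finset X} (hT : Fintype.card ι < T.card) :
    ∃ r > 0, ∀ d : ι → X, ∃ x ∈ T, ∀ l, r ≤ dist x (d l) := by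
  rcases isEmpty_or_nonempty ι with hι | hι
  · obtain ⟨x, hx⟩ := Finset.card_pos.1 (pos_of_gt hT)
    exact ⟨1, one_pos, fun _ => ⟨x, hx, isEmptyElim⟩⟩
  have hcard : 1 < T.card := lt_of_le_of_lt Fintype.card_pos hT
  have hsep : 0 < (T : Set X).infsep :=
    T.infsep_pos_iff_nontrivial.2 (Finset.one_lt_card_iff_nontrivial.1 hcard)
  refine ⟨(T : Set X).infsep / 2, half_pos hsep, fun d => ?_⟩
  by_contra! hclose
  choose! l hl using hclose
  obtain ⟨x, hx, y, hy, hxy, hlxy⟩ := Finset.exists_ne_map_eq_of_card_lt_of_maps_to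
    (t := Finset.univ) hT (f := l) fun _ _ => Finset.mem_univ _
  have hxd := hl x hx
  have hyd := hl y hy
  rw [← hlxy] at hyd
  linarith [Set.infsep_le_dist_of_mem hx hy hxy, dist_triangle_right x y (d (l x))]

end Metric

section NormedGeometry

variable {E : Type*}

lemma norm_sub_sq_le_add_mul_norm_sub [SeminormedAddCommGroup E] {M : ℝ} {x u v : E}
    (hx : ‖x‖ ≤ M) (hu : ‖u‖ ≤ M) (hv : ‖v‖ ≤ M) :
    ‖x - u‖ ^ 2 ≤ ‖x - v‖ ^ 2 + 4 * M * ‖u - v‖ := by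
  have htri : ‖x - u‖ - ‖x - v‖ ≤ ‖u - v‖ := by
    simpa [norm_sub_rev v u] using norm_sub_norm_le (x - u) (x - v)
  have hsum : ‖x - u‖ + ‖x - v‖ ≤ 4 * M := by linarith [norm_sub_le x u, norm_sub_le x v]
  calc ‖x - u‖ ^ 2 = ‖x - v‖ ^ 2 + (‖x - u‖ + ‖x - v‖) * (‖x - u‖ - ‖x - v‖) := by ring
    _ ≤ ‖x - v‖ ^ 2 + (‖x - u‖ + ‖x - v‖) * ‖u - v‖ := by gcongr
    _ ≤ ‖x - v‖ ^ 2 + 4 * M * ‖u - v‖ := by gcongr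

-- `y` is the orthogonal projection of `x` onto the bisecting hyperplane of `p` and `q`.
lemma exists_norm_sub_eq_and_norm_sub_eq_div [NormedAddCommGroup E] [InnerProductSpace ℝ E]
    {p q : E} (hpq : p ≠ q) (x : E) :
    ∃ y, ‖y - p‖ = ‖y - q‖ ∧
      ‖x - y‖ = |‖x - q‖ ^ 2 - ‖x - p‖ ^ 2| / (2 * ‖p - q‖) := by
  set u := p - q with hu
  have hu0 : 0 < ‖u‖ := norm_pos_iff.2 (sub_ne_zero.2 hpq)
  set f := ‖x - q‖ ^ 2 - ‖x - p‖ ^ 2 with hf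
  set s := f / (2 * ‖u‖ ^ 2) with hs
  have hsu : 2 * (s * ‖u‖ ^ 2) = f := by rw [hs]; field_simp
  refine ⟨x - s • u, ?_, ?_⟩
  · have hfu : f = ‖u‖ ^ 2 + 2 * ⟪x - p, u⟫_ℝ := by
      rw [hf, show x - q = x - p + u by rw [hu]; abel, norm_add_sq_real]; ring
    refine (pow_left_inj₀ (norm_nonneg _) (norm_nonneg _) two_ne_zero).1 ?_
    rw [show x - s • u - q = x - s • u - p + u by rw [hu]; abel, norm_add_sq_real,
      show x - s • u - p = x - p - s • u by abel, inner_sub_left, real_inner_smul_left,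
      real_inner_self_eq_norm_sq]
    linarith
  · rw [sub_sub_cancel, norm_smul, hs, Real.norm_eq_abs, abs_div,
      abs_of_nonneg (by positivity : 0 ≤ 2 * ‖u‖ ^ 2)]
    field_simp

end NormedGeometry

section Voronoi

variable {E : Type*} [NormedAddCommGroup E] {k : ℕ} {c c' : Fin k → E} {i j l : Fin k} {x y : E}

lemma qgamma_le (c : Fin k → E) (x : E) (j : Fin k) : qgamma k c x ≤ ‖x - c j‖ ^ 2 :=
  ciInf_le (Set.finite_range _).bddBelow j

lemma qgamma_nonneg (c : Fin k → E) (x : E) : 0 ≤ qgamma k c x :=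
  Real.iInf_nonneg fun _ => sq_nonneg _

lemma exists_mem_vcell [NeZero k] (c : Fin k → E) (x : E) : ∃ i, x ∈ vcell k c i :=
  Finite.exists_min fun i => ‖x - c i‖

lemma qgamma_eq_of_mem_vcell (hx : x ∈ vcell k c i) : qgamma k c x = ‖x - c i‖ ^ 2 :=
  have : Nonempty (Fin k) := ⟨i⟩
  le_antisymm (qgamma_le c x i) (le_ciInf fun j => pow_le_pow_left₀ (norm_nonneg _) (hx j) 2)

lemma isClosed_vcell (c : Fin k → E) (i : Fin k) : IsClosed (vcell k c i) := by
  simp only [vcell, Set.ofPred_forall]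
  exact isClosed_iInter fun j => isClosed_le (by fun_prop) (by fun_prop)

lemma iUnion_vcell [NeZero k] (c : Fin k → E) : ⋃ i, vcell k c i = Set.univ :=
  Set.eq_univ_of_forall fun x => Set.mem_iUnion.2 (exists_mem_vcell c x)

lemma vcell_inter_vcell_subset_nbd (hij : i ≠ j) : vcell k c i ∩ vcell k c j ⊆ nbd k c :=
  fun _ hx => Set.mem_iUnion₂.2 ⟨i, j, Set.mem_iUnion.2 ⟨hij, hx⟩⟩

lemma qgamma_update_le_of_mem_vcell (hx : x ∈ vcell k c l) (hl : l ≠ i) (y : E) :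
    qgamma k (Function.update c i y) x ≤ qgamma k c x := by
  simpa only [qgamma_eq_of_mem_vcell hx, Function.update_of_ne hl]
    using qgamma_le (Function.update c i y) x l

lemma qgamma_update_le_of_eq (hij : i ≠ j) (hc : c i = c j) (x y : E) :
    qgamma k (Function.update c i y) x ≤ qgamma k c x := by
  have : NeZero k := NeZero.of_pos i.pos
  obtain ⟨l, hl⟩ := exists_mem_vcell c x
  by_cases hli : l = i
  · have hj : x ∈ vcell k c j := by rwa [vcell, ← hc, ← hli]
    exact qgamma_update_le_of_mem_vcell hj hij.symm y
  · exact qgamma_update_le_of_mem_vcell hl hli y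

lemma norm_sub_sq_le_of_mem_vcell {M : ℝ} (hx : ‖x‖ ≤ M) (hc : ∀ l, ‖c l‖ ≤ M)
    (hc' : ∀ l, ‖c' l‖ ≤ M) (hi : x ∈ vcell k c i) (j : Fin k) :
    ‖x - c' i‖ ^ 2 ≤ ‖x - c' j‖ ^ 2 + 8 * M * dist c c' := by
  have hM : 0 ≤ M := (norm_nonneg x).trans hx
  have hdist (l) : 4 * M * ‖c l - c' l‖ ≤ 4 * M * dist c c' := by
    rw [← dist_eq_norm]
    exact mul_le_mul_of_nonneg_left (dist_le_pi_dist c c' l) (by positivity)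
  have hii := norm_sub_sq_le_add_mul_norm_sub hx (hc' i) (hc i)
  have hjj := norm_sub_sq_le_add_mul_norm_sub hx (hc j) (hc' j)
  have hij : ‖x - c i‖ ^ 2 ≤ ‖x - c j‖ ^ 2 := pow_le_pow_left₀ (norm_nonneg _) (hi j) 2
  rw [norm_sub_rev (c' i) (c i)] at hii
  linarith [hdist i, hdist j]

variable [InnerProductSpace ℝ E]

-- The segment is connected and covered by two closed sets: the `i`-th cell and the other cells.
lemma exists_mem_segment_mem_nbd (hij : i ≠ j) (hx : x ∈ vcell k c i)
    (hy : ‖y - c j‖ ≤ ‖y - c i‖) : ∃ z ∈ segment ℝ x y, z ∈ nbd k c := by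
  have : NeZero k := NeZero.of_pos i.pos
  have hseg : IsPreconnected (segment ℝ x y) := (convex_segment x y).isPreconnected
  have hclosed : IsClosed (⋃ l : {l // l ≠ i}, vcell k c l) :=
    isClosed_iUnion_of_finite fun l => isClosed_vcell c l
  have hcover (z : E) : z ∈ vcell k c i ∪ ⋃ l : {l // l ≠ i}, vcell k c l := by
    obtain ⟨l, hl⟩ := exists_mem_vcell c z
    by_cases hli : l = i
    · exact .inl (hli ▸ hl)
    · exact .inr (Set.mem_iUnion.2 ⟨⟨l, hli⟩, hl⟩)
  have hyother : y ∈ ⋃ l : {l // l ≠ i}, vcell k c l := by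
    refine (hcover y).elim (fun hyi => ?_) id
    exact Set.mem_iUnion.2 ⟨⟨j, hij.symm⟩, fun m => hy.trans (hyi m)⟩
  obtain ⟨z, hz, hzi, hzother⟩ := isPreconnected_closed_iff.1 hseg _ _ (isClosed_vcell c i)
    hclosed (fun z _ => hcover z) ⟨x, left_mem_segment ℝ x y, hx⟩
    ⟨y, right_mem_segment ℝ x y, hyother⟩
  obtain ⟨⟨l, hli⟩, hzl⟩ := Set.mem_iUnion.1 hzother
  exact ⟨z, hz, vcell_inter_vcell_subset_nbd hli ⟨hzl, hzi⟩⟩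

lemma mem_cthickening_nbd_of_mem_vcell (hij : i ≠ j) (hc : c i ≠ c j) (hx : x ∈ vcell k c i) :
    x ∈ cthickening ((‖x - c j‖ ^ 2 - ‖x - c i‖ ^ 2) / (2 * ‖c i - c j‖)) (nbd k c) := by
  obtain ⟨y, hy, hxy⟩ := exists_norm_sub_eq_and_norm_sub_eq_div hc x
  obtain ⟨z, hz, hznbd⟩ := exists_mem_segment_mem_nbd hij hx hy.ge
  refine mem_cthickening_of_dist_le x z _ _ hznbd ?_
  have hnonneg : 0 ≤ ‖x - c j‖ ^ 2 - ‖x - c i‖ ^ 2 :=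
    sub_nonneg.2 (pow_le_pow_left₀ (norm_nonneg _) (hx j) 2)
  rw [← abs_of_nonneg hnonneg, ← hxy, ← dist_eq_norm]
  have hzball := (convex_closedBall x (dist x y)).segment_subset
    (mem_closedBall_self dist_nonneg) (mem_closedBall'.2 le_rfl) hz
  exact mem_closedBall'.1 hzball

lemma mem_cthickening_nbd_of_mem_vcell_of_mem_vcell {M b : ℝ} (hb : 0 < b)
    (hbc : b ≤ ‖c i - c j‖) (hx : ‖x‖ ≤ M) (hc : ∀ l, ‖c l‖ ≤ M) (hc' : ∀ l, ‖c' l‖ ≤ M)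
    (hij : i ≠ j) (hi : x ∈ vcell k c i) (hj : x ∈ vcell k c' j) :
    x ∈ cthickening (4 * M * dist c c' / b) (nbd k c) := by
  have hM : 0 ≤ M := (norm_nonneg x).trans hx
  have hne : c i ≠ c j := sub_ne_zero.1 (norm_pos_iff.1 (hb.trans_le hbc))
  refine cthickening_mono ?_ _ (mem_cthickening_nbd_of_mem_vcell hij hne hi)
  have hdiff := norm_sub_sq_le_of_mem_vcell hx hc' hc hj i
  rw [dist_comm] at hdiff
  calc (‖x - c j‖ ^ 2 - ‖x - c i‖ ^ 2) / (2 * ‖c i - c j‖)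
      ≤ 8 * M * dist c c' / (2 * b) := by gcongr; linarith
    _ = 4 * M * dist c c' / b := by field_simp; ring

lemma norm_sub_sq_le_qgamma_add_indicator {M b : ℝ} (hb : 0 < b)
    (hbc : ∀ j, i ≠ j → b ≤ ‖c i - c j‖) (hx : ‖x‖ ≤ M) (hc : ∀ l, ‖c l‖ ≤ M)
    (hc' : ∀ l, ‖c' l‖ ≤ M) (hi : x ∈ vcell k c i) :
    ‖x - c' i‖ ^ 2 ≤ qgamma k c' x + (cthickening (4 * M * dist c c' / b) (nbd k c)).indicator
      (fun _ => 8 * M * dist c c') x := by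
  have hM : 0 ≤ M := (norm_nonneg x).trans hx
  have : NeZero k := NeZero.of_pos i.pos
  obtain ⟨j, hj⟩ := exists_mem_vcell c' x
  rw [qgamma_eq_of_mem_vcell hj]
  by_cases hij : i = j
  · rw [hij]
    exact le_add_of_nonneg_right (Set.indicator_nonneg (fun _ _ => by positivity) x)
  · rw [Set.indicator_of_mem
      (mem_cthickening_nbd_of_mem_vcell_of_mem_vcell hb (hbc j hij) hx hc hc' hij hi hj)]
    exact norm_sub_sq_le_of_mem_vcell hx hc hc' hi j

end Voronoi

section Barycenter

variable {E : Type*} [NormedAddCommGroup E] [MeasurableSpace E] {μ P : Measure E}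

lemma integrable_norm_sub_sq [IsFiniteMeasure μ] (hμ : MemLp id 2 μ) (y : E) :
    Integrable (fun x => ‖x - y‖ ^ 2) μ :=
  (hμ.sub (memLp_const y)).integrable_norm_pow two_ne_zero

lemma exists_finiteDimensional_integral_norm_sub_lt [NormedSpace ℝ E] (hμ : Integrable id μ)
    {ε : ℝ} (hε : 0 < ε) :
    ∃ F : Submodule ℝ E, FiniteDimensional ℝ F ∧ ∃ s : E → E, Integrable s μ ∧ (∀ x, s x ∈ F) ∧
      ∫ x, ‖x - s x‖ ∂μ < ε := by
  obtain ⟨s, hs, hsmem⟩ := (memLp_one_iff_integrable.2 hμ).exists_simpleFunc_eLpNorm_sub_lt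
    ENNReal.one_ne_top (ENNReal.ofReal_pos.2 hε).ne'
  have hsint : Integrable s μ := memLp_one_iff_integrable.1 hsmem
  refine ⟨Submodule.span ℝ (Set.range s), .span_of_finite ℝ s.finite_range, s, hsint,
    fun x => Submodule.subset_span (Set.mem_range_self x), ?_⟩
  rw [eLpNorm_one_eq_lintegral_enorm, ← ofReal_integral_norm_eq_lintegral_enorm (hμ.sub hsint)]
    at hs
  exact (ENNReal.ofReal_lt_ofReal_iff hε).1 hs

variable [InnerProductSpace ℝ E]

/-- `m` is a barycenter (centroid) of `μ` in the weak sense: `∫ (x - m) ∂μ` vanishes against every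
vector. Only scalar integrals occur, so that no vector-valued integral has to exist; the notion is
meant for measures with an integrable identity, since otherwise these integrals are `0` by
convention. -/
def IsBarycenter (μ : Measure E) (m : E) : Prop :=
  ∀ v, ∫ x, ⟪x - m, v⟫_ℝ ∂μ = 0

variable {m : E}

lemma integral_norm_sub_sq [IsFiniteMeasure μ] (hμ : MemLp id 2 μ) (m y : E) :
    ∫ x, ‖x - y‖ ^ 2 ∂μ =
      ∫ x, ‖x - m‖ ^ 2 ∂μ + 2 * ∫ x, ⟪x - m, m - y⟫_ℝ ∂μ + μ.real Set.univ * ‖m - y‖ ^ 2 := by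
  have hinner : Integrable (fun x => 2 * ⟪x - m, m - y⟫_ℝ) μ :=
    (((hμ.integrable one_le_two).sub (integrable_const m)).inner_const (m - y)).const_mul 2
  have hsum : Integrable (fun x => ‖x - m‖ ^ 2 + 2 * ⟪x - m, m - y⟫_ℝ) μ :=
    (integrable_norm_sub_sq hμ m).add hinner
  have hexpand (x : E) : ‖x - y‖ ^ 2 = ‖x - m‖ ^ 2 + 2 * ⟪x - m, m - y⟫_ℝ + ‖m - y‖ ^ 2 := by
    rw [← norm_add_sq_real, sub_add_sub_cancel]
  rw [integral_congr_ae (.of_forall hexpand),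
    integral_add hsum (integrable_const _), integral_add (integrable_norm_sub_sq hμ m) hinner,
    integral_const_mul, integral_const, smul_eq_mul]

lemma IsBarycenter.integral_norm_sub_sq [IsFiniteMeasure μ] (hm : IsBarycenter μ m)
    (hμ : MemLp id 2 μ) (y : E) :
    ∫ x, ‖x - y‖ ^ 2 ∂μ = ∫ x, ‖x - m‖ ^ 2 ∂μ + μ.real Set.univ * ‖m - y‖ ^ 2 := by
  rw [_root_.integral_norm_sub_sq hμ m y, hm, mul_zero, add_zero]

lemma isBarycenter_of_forall_integral_norm_sub_sq_le [IsFiniteMeasure μ] (hμ : MemLp id 2 μ)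
    (hmin : ∀ y, ∫ x, ‖x - m‖ ^ 2 ∂μ ≤ ∫ x, ‖x - y‖ ^ 2 ∂μ) : IsBarycenter μ m := by
  intro v
  set b := ∫ x, ⟪x - m, v⟫_ℝ ∂μ with hb
  have hquad (t : ℝ) : 0 ≤ μ.real Set.univ * ‖v‖ ^ 2 * (t * t) + 2 * b * t + 0 := by
    have hmt := hmin (m - t • v)
    simp only [integral_norm_sub_sq hμ m (m - t • v), sub_sub_cancel, inner_smul_right,
      integral_const_mul, norm_smul, mul_pow, Real.norm_eq_abs, sq_abs, ← hb] at hmt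
    linarith
  have hdiscrim := discrim_le_zero hquad
  rw [discrim] at hdiscrim
  nlinarith [sq_nonneg b]

lemma IsBarycenter.measureReal_mul_norm_sub_starProjection_le [IsFiniteMeasure μ]
    (hm : IsBarycenter μ m) (hμ : Integrable id μ) (F : Submodule ℝ E) [F.HasOrthogonalProjection]
    {s : E → E} (hs : Integrable s μ) (hsF : ∀ x, s x ∈ F) :
    μ.real Set.univ * ‖m - F.starProjection m‖ ≤ ∫ x, ‖x - s x‖ ∂μ := by
  set w := m - F.starProjection m with hw
  have hwF : w ∈ Fᗮ := F.sub_starProjection_mem_orthogonal m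
  have hdiff : Integrable (fun x => x - s x) μ := hμ.sub hs
  have hmw : ⟪m, w⟫_ℝ = ‖w‖ ^ 2 := by
    rw [← real_inner_self_eq_norm_sq, ← sub_eq_zero, ← inner_sub_left, hw, sub_sub_cancel]
    exact Submodule.inner_right_of_mem_orthogonal (F.starProjection_apply_mem m) hwF
  have hinner (x : E) : ⟪x - s x, w⟫_ℝ = ⟪x - m, w⟫_ℝ + ‖w‖ ^ 2 := by
    rw [← hmw, ← inner_add_left, sub_add_cancel, inner_sub_left,
      Submodule.inner_right_of_mem_orthogonal (hsF x) hwF, sub_zero]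
  have hsq : μ.real Set.univ * ‖w‖ ^ 2 = ∫ x, ⟪x - s x, w⟫_ℝ ∂μ := by
    simp_rw [hinner]
    rw [integral_add ((hμ.sub (integrable_const m)).inner_const w) (integrable_const _), hm w,
      integral_const, smul_eq_mul, zero_add]
  have hle : μ.real Set.univ * ‖w‖ ^ 2 ≤ (∫ x, ‖x - s x‖ ∂μ) * ‖w‖ := by
    rw [hsq, ← integral_mul_const]
    exact integral_mono (hdiff.inner_const w) (hdiff.norm.mul_const _)
      fun x => real_inner_le_norm _ _
  rcases (norm_nonneg w).eq_or_lt with hw0 | hw0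
  · rw [← hw0, mul_zero]
    exact integral_nonneg fun _ => norm_nonneg _
  · exact le_of_mul_le_mul_right (by linarith) hw0

lemma IsBarycenter.measureReal_mul_norm_le [IsFiniteMeasure μ] (hm : IsBarycenter μ m)
    (hμ : Integrable id μ) : μ.real Set.univ * ‖m‖ ≤ ∫ x, ‖x‖ ∂μ := by
  simpa using hm.measureReal_mul_norm_sub_starProjection_le hμ ⊥ (integrable_zero E E μ)
    fun _ => Submodule.zero_mem _

lemma IsBarycenter.norm_le [IsFiniteMeasure μ] [NeZero μ] (hm : IsBarycenter μ m)
    (hμ : Integrable id μ) {M : ℝ} (hM : ∀ᵐ x ∂μ, ‖x‖ ≤ M) : ‖m‖ ≤ M := by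
  have hint : ∫ x, ‖x‖ ∂μ ≤ μ.real Set.univ * M := by
    simpa using integral_mono_ae hμ.norm (integrable_const M) hM
  exact le_of_mul_le_mul_left ((hm.measureReal_mul_norm_le hμ).trans hint) measureReal_univ_pos

-- Up to `ε`, these barycenters lie in a bounded part of a finite-dimensional subspace.
lemma totallyBounded_setOf_isBarycenter_restrict [IsFiniteMeasure P] (hP : Integrable id P)
    {q : ℝ} (hq : 0 < q) :
    TotallyBounded {m | ∃ V, q ≤ P.real V ∧ IsBarycenter (P.restrict V) m} := by
  refine totallyBounded_of_forall_exists_dist_lt fun ε hε => ?_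
  obtain ⟨F, hF, s, hs, hsF, hsε⟩ :=
    exists_finiteDimensional_integral_norm_sub_lt hP (mul_pos hq hε)
  set R := (∫ x, ‖x‖ ∂P) / q
  have hcompact : IsCompact (((↑) : F → E) '' closedBall 0 R) :=
    (isCompact_closedBall 0 R).image continuous_subtype_val
  refine ⟨_, hcompact.totallyBounded, fun m ⟨V, hV, hm⟩ => ?_⟩
  have hmass {f : E → E} {a : ℝ} (ha : 0 ≤ a) (hf : Integrable f P)
      (h : (P.restrict V).real Set.univ * a ≤ ∫ x in V, ‖f x‖ ∂P) :
      q * a ≤ ∫ x, ‖f x‖ ∂P := by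
    rw [measureReal_restrict_apply_univ] at h
    exact (mul_le_mul_of_nonneg_right hV ha).trans
      (h.trans (setIntegral_le_integral hf.norm (.of_forall fun _ => norm_nonneg _)))
  have hnorm : ‖m‖ ≤ R := (le_div_iff₀' hq).2 <|
    hmass (norm_nonneg m) hP (hm.measureReal_mul_norm_le hP.restrict)
  have hproj : q * ‖m - F.starProjection m‖ ≤ ∫ x, ‖x - s x‖ ∂P :=
    hmass (norm_nonneg _) (hP.sub hs)
      (hm.measureReal_mul_norm_sub_starProjection_le hP.restrict F hs.restrict hsF)
  refine ⟨F.starProjection m, ⟨F.orthogonalProjectionOnto m, ?_, rfl⟩, ?_⟩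
  · exact mem_closedBall_zero_iff.2 ((F.norm_starProjection_apply_le m).trans hnorm)
  · rw [dist_eq_norm]
    exact lt_of_mul_lt_mul_left (hproj.trans_lt hsε) hq.le

end Barycenter

section Risk

variable {E : Type*} [NormedAddCommGroup E] [MeasurableSpace E] [OpensMeasurableSpace E]
  {k : ℕ} {P : Measure E} {c d : Fin k → E} {i j : Fin k}

lemma integral_eq_sum_setIntegral_vcell [NeZero k] (hN : P (nbd k c) = 0) {f : E → ℝ}
    (hf : Integrable f P) : ∫ x, f x ∂P = ∑ i, ∫ x in vcell k c i, f x ∂P := by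
  rw [← setIntegral_univ, ← iUnion_vcell c, integral_iUnion_ae
    (fun i => (isClosed_vcell c i).measurableSet.nullMeasurableSet)
    (fun i j hij => measure_mono_null (vcell_inter_vcell_subset_nbd hij) hN) hf.integrableOn,
    tsum_fintype]

variable [IsFiniteMeasure P]

lemma integrable_qgamma [NeZero k] (hP : MemLp id 2 P) (c : Fin k → E) :
    Integrable (qgamma k c) P := by
  have hmeas : Measurable (qgamma k c) :=
    .iInf fun j => (by fun_prop : Continuous fun x => ‖x - c j‖ ^ 2).measurable
  refine (integrable_norm_sub_sq hP (c 0)).mono' hmeas.aestronglyMeasurable (.of_forall fun x => ?_)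
  rw [Real.norm_of_nonneg (qgamma_nonneg c x)]
  exact qgamma_le c x 0

-- Moving `c i` to `y` while keeping the points of the `i`-th cell assigned to index `i` can only
-- overestimate the new risk.
lemma qrisk_update_add_setIntegral_le (hP : MemLp id 2 P) (c : Fin k → E) (i : Fin k) (y : E) :
    qrisk k P (Function.update c i y) + ∫ x in vcell k c i, ‖x - c i‖ ^ 2 ∂P ≤
      qrisk k P c + ∫ x in vcell k c i, ‖x - y‖ ^ 2 ∂P := by
  have : NeZero k := NeZero.of_pos i.pos
  have hint (c : Fin k → E) : Integrable (qgamma k c) P := integrable_qgamma hP c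
  have hV : MeasurableSet (vcell k c i) := (isClosed_vcell c i).measurableSet
  have hcell : ∫ x in vcell k c i, qgamma k (Function.update c i y) x ∂P ≤
      ∫ x in vcell k c i, ‖x - y‖ ^ 2 ∂P := by
    refine integral_mono (hint _).restrict (integrable_norm_sub_sq (hP.restrict _) y) fun x => ?_
    simpa only [Function.update_self] using qgamma_le (Function.update c i y) x i
  have hcompl : ∫ x in (vcell k c i)ᶜ, qgamma k (Function.update c i y) x ∂P ≤
      ∫ x in (vcell k c i)ᶜ, qgamma k c x ∂P := by
    refine setIntegral_mono_on (hint _).integrableOn (hint _).integrableOn hV.compl fun x hx => ?_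
    obtain ⟨l, hl⟩ := exists_mem_vcell c x
    exact qgamma_update_le_of_mem_vcell hl (by rintro rfl; exact hx hl) y
  have heq : ∫ x in vcell k c i, qgamma k c x ∂P = ∫ x in vcell k c i, ‖x - c i‖ ^ 2 ∂P :=
    setIntegral_congr_fun hV fun _ hx => qgamma_eq_of_mem_vcell hx
  simp only [qrisk, ← integral_add_compl hV (hint _)]
  linarith

lemma setIntegral_vcell_le_of_mem_qopt (hP : MemLp id 2 P) (hc : c ∈ qopt k P) (i : Fin k)
    (y : E) : ∫ x in vcell k c i, ‖x - c i‖ ^ 2 ∂P ≤ ∫ x in vcell k c i, ‖x - y‖ ^ 2 ∂P := by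
  linarith [qrisk_update_add_setIntegral_le hP c i y, hc (Function.update c i y)]

lemma isBarycenter_of_mem_qopt [InnerProductSpace ℝ E] (hP : MemLp id 2 P) (hc : c ∈ qopt k P)
    (i : Fin k) : IsBarycenter (P.restrict (vcell k c i)) (c i) :=
  isBarycenter_of_forall_integral_norm_sub_sq_le (hP.restrict _)
    (setIntegral_vcell_le_of_mem_qopt hP hc i)

lemma qrisk_update_add_le_of_eq (hP : MemLp id 2 P) (hij : i ≠ j) (hd : d i = d j) {y : E} {ρ : ℝ}
    (hρ : 0 ≤ ρ) (hy : ∀ l, 3 * ρ ≤ dist y (d l)) :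
    qrisk k P (Function.update d i y) + P.real (closedBall y ρ) * (3 * ρ ^ 2) ≤ qrisk k P d := by
  have : NeZero k := NeZero.of_pos i.pos
  have hball : Integrable ((closedBall y ρ).indicator fun _ => 3 * ρ ^ 2) P :=
    (integrable_const _).indicator measurableSet_closedBall
  rw [← smul_eq_mul (P.real _), ← integral_indicator_const _ measurableSet_closedBall, qrisk, qrisk,
    ← integral_add (integrable_qgamma hP _) hball]
  refine integral_mono ((integrable_qgamma hP _).add hball) (integrable_qgamma hP _) fun x => ?_
  by_cases hx : x ∈ closedBall y ρ
  · obtain ⟨l, hl⟩ := exists_mem_vcell d x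
    have hxy : ‖x - y‖ ≤ ρ := by simpa only [mem_closedBall, dist_eq_norm] using hx
    have hxd : 2 * ρ ≤ ‖x - d l‖ := by
      linarith [hy l, dist_eq_norm x y, dist_eq_norm x (d l), dist_triangle_left y (d l) x]
    have hupdate : qgamma k (Function.update d i y) x ≤ ‖x - y‖ ^ 2 := by
      simpa only [Function.update_self] using qgamma_le (Function.update d i y) x i
    rw [Set.indicator_of_mem hx, qgamma_eq_of_mem_vcell hl]
    linarith [pow_le_pow_left₀ (norm_nonneg _) hxy 2, pow_le_pow_left₀ (by positivity) hxd 2]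
  · rw [Set.indicator_of_notMem hx, add_zero]
    exact qgamma_update_le_of_eq hij hd x y

end Risk

section Support

variable {E : Type*} [MeasurableSpace E] {k : ℕ} {P : Measure E} {T : Finset E}

lemma suppGT.neZero (hsupp : suppGT P k) : NeZero P :=
  ⟨fun hP => hsupp ∅ (Nat.zero_le k) (by rw [hP, Measure.coe_zero, Pi.zero_apply])⟩

lemma suppGT.exists_subset_support_card_eq [TopologicalSpace E] [HereditarilyLindelofSpace E]
    (hsupp : suppGT P k) : ∃ T : Finset E, (T : Set E) ⊆ P.support ∧ T.card = k + 1 := by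
  rcases P.support.finite_or_infinite with hfin | hinf
  · have hcard : k + 1 ≤ hfin.toFinset.card := by
      by_contra! hlt
      refine hsupp hfin.toFinset (Nat.lt_succ_iff.1 hlt) ?_
      rw [hfin.coe_toFinset]
      exact Measure.measure_compl_support
    obtain ⟨T, hT, hTcard⟩ := Finset.exists_subset_card_eq hcard
    exact ⟨T, (Finset.coe_subset.2 hT).trans_eq hfin.coe_toFinset, hTcard⟩
  · exact hinf.exists_subset_card_eq (k + 1)

lemma exists_pos_forall_le_measureReal_closedBall [PseudoMetricSpace E] [IsFiniteMeasure P]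
    (hT : (T : Set E) ⊆ P.support) {ρ : ℝ} (hρ : 0 < ρ) :
    ∃ m > 0, ∀ x ∈ T, m ≤ P.real (closedBall x ρ) := by
  rcases T.eq_empty_or_nonempty with rfl | hTne
  · exact ⟨1, one_pos, by simp⟩
  obtain ⟨x, hx, hmin⟩ := T.exists_min_image (fun x => P.real (closedBall x ρ)) hTne
  have hpos := (Measure.mem_support_iff_forall x).1 (hT hx) _ (closedBall_mem_nhds x hρ)
  exact ⟨_, ENNReal.toReal_pos hpos.ne' (measure_ne_top P _), hmin⟩

end Support

section Gap

variable {E : Type*} [NormedAddCommGroup E] [MeasurableSpace E] [OpensMeasurableSpace E]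
  [SecondCountableTopology E] {k : ℕ} {P : Measure E} [IsFiniteMeasure P]

lemma exists_pos_qrisk_update_add_le_of_eq (hP : MemLp id 2 P) (hsupp : suppGT P k) :
    ∃ δ > 0, ∀ (d : Fin k → E) (i j : Fin k), i ≠ j → d i = d j →
      ∃ y, qrisk k P (Function.update d i y) + δ ≤ qrisk k P d := by
  obtain ⟨T, hT, hTcard⟩ := hsupp.exists_subset_support_card_eq
  obtain ⟨r, hr, hfar⟩ := exists_pos_forall_exists_le_dist (ι := Fin k) (T := T) (by simp [hTcard])
  obtain ⟨m, hm, hmass⟩ := exists_pos_forall_le_measureReal_closedBall hT (div_pos hr three_pos)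
  refine ⟨m * (3 * (r / 3) ^ 2), by positivity, fun d i j hij hd => ?_⟩
  obtain ⟨y, hyT, hy⟩ := hfar d
  refine ⟨y, le_trans ?_ (qrisk_update_add_le_of_eq hP hij hd (y := y) (ρ := r / 3) (by positivity)
    fun l => (hy l).trans_eq' (by ring))⟩
  gcongr
  exact hmass y hyT

lemma exists_pos_add_setIntegral_vcell_le (hP : MemLp id 2 P) (hsupp : suppGT P k) :
    ∃ δ > 0, ∀ c ∈ qopt k P, ∀ i j, i ≠ j →
      δ + ∫ x in vcell k c i, ‖x - c i‖ ^ 2 ∂P ≤ ∫ x in vcell k c i, ‖x - c j‖ ^ 2 ∂P := by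
  obtain ⟨δ, hδ, hgap⟩ := exists_pos_qrisk_update_add_le_of_eq hP hsupp
  refine ⟨δ, hδ, fun c hc i j hij => ?_⟩
  set d := Function.update c i (c j) with hd
  have hdij : d i = d j := by rw [hd, Function.update_self, Function.update_of_ne hij.symm]
  obtain ⟨y, hy⟩ := hgap d i j hij hdij
  linarith [hc (Function.update d i y), qrisk_update_add_setIntegral_le hP c i (c j)]

end Gap

section Bounded

variable {E : Type*} [NormedAddCommGroup E] [MeasurableSpace E] {k : ℕ} {P : Measure E} {M : ℝ}

lemma mbounded.pos (hM : mbounded P M) (hk : 1 ≤ k) (hsupp : suppGT P k) : 0 < M := by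
  by_contra! hM0
  refine hsupp {0} hk (measure_mono_null (Set.compl_subset_compl.2 fun x hx => ?_) hM)
  simpa using (mem_closedBall_zero_iff.1 hx).trans hM0

lemma mbounded.ae_norm_le (hM : mbounded P M) : ∀ᵐ x ∂P, ‖x‖ ≤ M :=
  (measure_eq_zero_iff_ae_notMem.1 hM).mono fun _ hx =>
    mem_closedBall_zero_iff.1 (Set.notMem_compl_iff.1 hx)

variable [OpensMeasurableSpace E] [SecondCountableTopology E] [IsFiniteMeasure P]

lemma mbounded.memLp_two (hM : mbounded P M) : MemLp id 2 P :=
  .of_bound aestronglyMeasurable_id M hM.ae_norm_le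

lemma measureReal_vcell_pos (hP : MemLp id 2 P) (hk : 2 ≤ k) (hsupp : suppGT P k) {c : Fin k → E}
    (hc : c ∈ qopt k P) (i : Fin k) : 0 < P.real (vcell k c i) := by
  have : Nontrivial (Fin k) := Fin.nontrivial_iff_two_le.2 hk
  obtain ⟨δ, hδ, hgap⟩ := exists_pos_add_setIntegral_vcell_le hP hsupp
  obtain ⟨j, hj⟩ := exists_ne i
  refine measureReal_nonneg.lt_of_ne' fun hzero => ?_
  have hrestrict : P.restrict (vcell k c i) = 0 :=
    Measure.restrict_eq_zero.2 ((measureReal_eq_zero_iff).1 hzero)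
  have hle := hgap c hc i j hj.symm
  simp only [hrestrict, integral_zero_measure] at hle
  linarith

variable [InnerProductSpace ℝ E]

lemma norm_le_of_mem_qopt (hM : mbounded P M) (hk : 2 ≤ k) (hsupp : suppGT P k) {c : Fin k → E}
    (hc : c ∈ qopt k P) (i : Fin k) : ‖c i‖ ≤ M := by
  have hmass := measureReal_vcell_pos hM.memLp_two hk hsupp hc i
  have : NeZero (P.restrict (vcell k c i)) :=
    ⟨fun h => hmass.ne' ((measureReal_eq_zero_iff).2 (Measure.restrict_eq_zero.1 h))⟩
  exact (isBarycenter_of_mem_qopt hM.memLp_two hc i).norm_le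
    (hM.memLp_two.integrable one_le_two).restrict (ae_restrict_of_ae hM.ae_norm_le)

lemma exists_pos_le_measureReal_vcell_mul_norm_sub (hM : mbounded P M) (hk : 2 ≤ k)
    (hsupp : suppGT P k) :
    ∃ ε > 0, ∀ c ∈ qopt k P, ∀ i j, i ≠ j → ε ≤ P.real (vcell k c i) * ‖c i - c j‖ := by
  have hMpos : 0 < M := hM.pos (one_le_two.trans hk) hsupp
  obtain ⟨δ, hδ, hgap⟩ := exists_pos_add_setIntegral_vcell_le hM.memLp_two hsupp
  refine ⟨δ / (4 * M), by positivity, fun c hc i j hij => ?_⟩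
  have hc' (l) : ‖c l‖ ≤ M := norm_le_of_mem_qopt hM hk hsupp hc l
  have hcj := integrable_norm_sub_sq (hM.memLp_two.restrict (vcell k c i)) (c j)
  have hci := integrable_norm_sub_sq (hM.memLp_two.restrict (vcell k c i)) (c i)
  have hshift : ∫ x in vcell k c i, ‖x - c j‖ ^ 2 ∂P ≤ ∫ x in vcell k c i, ‖x - c i‖ ^ 2 ∂P +
      P.real (vcell k c i) * (4 * M * ‖c i - c j‖) := by
    rw [← smul_eq_mul, ← setIntegral_const, ← integral_add hci (integrable_const _)]
    refine integral_mono_ae hcj (hci.add (integrable_const _)) ?_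
    filter_upwards [ae_restrict_of_ae hM.ae_norm_le] with x hx
    rw [norm_sub_rev (c i)]
    exact norm_sub_sq_le_add_mul_norm_sub hx (hc' j) (hc' i)
  rw [div_le_iff₀' (by positivity)]
  linarith [hgap c hc i j hij]

lemma qB_pos (hM : mbounded P M) (hk : 2 ≤ k) (hsupp : suppGT P k) (hne : (qopt k P).Nonempty) :
    0 < qB k P := by
  have : NeZero P := hsupp.neZero
  obtain ⟨c₀, hc₀⟩ := hne
  obtain ⟨ε, hε, hprod⟩ := exists_pos_le_measureReal_vcell_mul_norm_sub hM hk hsupp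
  have hle : ε / P.real Set.univ ≤ qB k P := by
    refine le_csInf ⟨_, c₀, hc₀, ⟨0, by omega⟩, ⟨1, hk⟩, by simp, rfl⟩ ?_
    rintro _ ⟨c, hc, i, j, hij, rfl⟩
    rw [div_le_iff₀' measureReal_univ_pos]
    exact (hprod c hc i j hij).trans 
      (mul_le_mul_of_nonneg_right (measureReal_mono (Set.subset_univ _)) (norm_nonneg _))
  exact (div_pos hε measureReal_univ_pos).trans_le hle

lemma qpmin_pos (hM : mbounded P M) (hk : 2 ≤ k) (hsupp : suppGT P k)
    (hne : (qopt k P).Nonempty) : 0 < qpmin k P := by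
  have : Nontrivial (Fin k) := Fin.nontrivial_iff_two_le.2 hk
  have hMpos : 0 < M := hM.pos (one_le_two.trans hk) hsupp
  obtain ⟨c₀, hc₀⟩ := hne
  obtain ⟨ε, hε, hprod⟩ := exists_pos_le_measureReal_vcell_mul_norm_sub hM hk hsupp
  have hle : ε / (2 * M) ≤ qpmin k P := by
    refine le_csInf ⟨_, c₀, hc₀, ⟨0, by omega⟩, rfl⟩ ?_
    rintro _ ⟨c, hc, i, rfl⟩
    obtain ⟨j, hj⟩ := exists_ne i
    rw [div_le_iff₀ (by positivity)]
    have hnorm : ‖c i - c j‖ ≤ 2 * M := by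
      linarith [norm_sub_le (c i) (c j), norm_le_of_mem_qopt hM hk hsupp hc i,
        norm_le_of_mem_qopt hM hk hsupp hc j]
    exact (hprod c hc i j hj.symm).trans (mul_le_mul_of_nonneg_left hnorm measureReal_nonneg)
  exact (by positivity : 0 < ε / (2 * M)).trans_le hle

end Bounded

section Margin

variable {E : Type*} [NormedAddCommGroup E] [MeasurableSpace E] {k : ℕ} {P : Measure E}
  {M r0 : ℝ} {c c' : Fin k → E} {i j : Fin k}

lemma qB_le (hc : c ∈ qopt k P) (hij : i ≠ j) : qB k P ≤ ‖c i - c j‖ :=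
  csInf_le ⟨0, by rintro _ ⟨_, _, _, _, _, rfl⟩; exact norm_nonneg _⟩ ⟨c, hc, i, j, hij, rfl⟩

lemma qpmin_le (hc : c ∈ qopt k P) (i : Fin k) : qpmin k P ≤ P.real (vcell k c i) :=
  csInf_le ⟨0, by rintro _ ⟨_, _, _, rfl⟩; exact ENNReal.toReal_nonneg⟩ ⟨c, hc, i, rfl⟩

variable [IsFiniteMeasure P]

lemma margin.measureReal_cthickening_le (h : margin k P M r0) (hc : c ∈ qopt k P) {t : ℝ}
    (ht : 0 ≤ t) (htr : t ≤ r0) :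
    P.real (cthickening t (nbd k c)) ≤ qB k P * qpmin k P * t / (128 * M ^ 2) := by
  have hle : P.real (cthickening t (nbd k c)) ≤ pweight k P t := by
    refine le_csSup ⟨P.real Set.univ, ?_⟩ ⟨c, hc, rfl⟩
    rintro _ ⟨d, _, rfl⟩
    exact measureReal_mono (Set.subset_univ _)
  exact hle.trans (h.2.2 t ht htr)

lemma margin.measure_nbd_eq_zero (h : margin k P M r0) (hc : c ∈ qopt k P) : P (nbd k c) = 0 := by
  refine measure_mono_null (self_subset_cthickening (δ := 0) _) ?_
  have hle := h.measureReal_cthickening_le hc le_rfl h.1.le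
  rw [mul_zero, zero_div] at hle
  exact (measureReal_eq_zero_iff).1 (hle.antisymm measureReal_nonneg)

variable [InnerProductSpace ℝ E] [OpensMeasurableSpace E]

lemma qrisk_add_sum_le [NeZero k] (hP : MemLp id 2 P) (hM : ∀ᵐ x ∂P, ‖x‖ ≤ M) (hc : ∀ l, ‖c l‖ ≤ M)
    (hc' : ∀ l, ‖c' l‖ ≤ M) {b : ℝ} (hb : 0 < b) (hbc : ∀ i j, i ≠ j → b ≤ ‖c i - c j‖)
    (hN : P (nbd k c) = 0) (hbary : ∀ i, IsBarycenter (P.restrict (vcell k c i)) (c i)) :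
    qrisk k P c + ∑ i, P.real (vcell k c i) * ‖c i - c' i‖ ^ 2 ≤ qrisk k P c' +
      P.real (cthickening (4 * M * dist c c' / b) (nbd k c)) * (8 * M * dist c c') := by
  set A := cthickening (4 * M * dist c c' / b) (nbd k c)
  set a := 8 * M * dist c c'
  have hmeas (i) : MeasurableSet (vcell k c i) := (isClosed_vcell c i).measurableSet
  have hA : MeasurableSet A := isClosed_cthickening.measurableSet
  have hAint : Integrable (A.indicator fun _ => a) P := (integrable_const a).indicator hA
  have hbound : Integrable (fun x => qgamma k c' x + A.indicator (fun _ => a) x) P :=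
    (integrable_qgamma hP c').add hAint
  have hrisk : qrisk k P c = ∑ i, ∫ x in vcell k c i, ‖x - c i‖ ^ 2 ∂P := by
    rw [qrisk, integral_eq_sum_setIntegral_vcell hN (integrable_qgamma hP c)]
    exact Finset.sum_congr rfl fun i _ =>
      setIntegral_congr_fun (hmeas i) fun x hx => qgamma_eq_of_mem_vcell hx
  have hcell (i) : ∫ x in vcell k c i, ‖x - c i‖ ^ 2 ∂P +
      P.real (vcell k c i) * ‖c i - c' i‖ ^ 2 = ∫ x in vcell k c i, ‖x - c' i‖ ^ 2 ∂P := by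
    rw [(hbary i).integral_norm_sub_sq (hP.restrict _) (c' i),
      measureReal_restrict_apply_univ]
  calc qrisk k P c + ∑ i, P.real (vcell k c i) * ‖c i - c' i‖ ^ 2
      = ∑ i, ∫ x in vcell k c i, ‖x - c' i‖ ^ 2 ∂P := by
        simp_rw [hrisk, ← Finset.sum_add_distrib, hcell]
    _ ≤ ∑ i, ∫ x in vcell k c i, (qgamma k c' x + A.indicator (fun _ => a) x) ∂P := by
        refine Finset.sum_le_sum fun i _ => setIntegral_mono_on_ae
          (integrable_norm_sub_sq hP _).integrableOn hbound.integrableOn (hmeas i) ?_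
        filter_upwards [hM] with x hx hxi
        exact norm_sub_sq_le_qgamma_add_indicator hb (hbc i) hx hc hc' hxi
    _ = qrisk k P c' + P.real A * a := by
        rw [← integral_eq_sum_setIntegral_vcell hN hbound,
          integral_add (integrable_qgamma hP c') hAint, integral_indicator_const _ hA, smul_eq_mul,
          qrisk]

lemma totallyBounded_qopt (hP : MemLp id 2 P) (hpos : 0 < qpmin k P) :
    TotallyBounded (qopt k P) := by
  have hcells : qopt k P ⊆ Set.univ.pi fun _ =>
      {m | ∃ V, qpmin k P ≤ P.real V ∧ IsBarycenter (P.restrict V) m} :=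
    fun _ hc i _ => ⟨_, qpmin_le hc i, isBarycenter_of_mem_qopt hP hc i⟩
  exact (totallyBounded_univ_pi fun _ => totallyBounded_setOf_isBarycenter_restrict
    (hP.integrable one_le_two) hpos).subset hcells

variable [SecondCountableTopology E]

lemma eq_of_mem_qopt_of_dist_le (hk : 2 ≤ k) (hsupp : suppGT P k) (h : margin k P M r0)
    (hc : c ∈ qopt k P) (hc' : c' ∈ qopt k P) (hdist : dist c c' ≤ qB k P * r0 / (4 * M)) :
    c = c' := by
  have hbdd : mbounded P M := h.2.1
  have : NeZero k := NeZero.of_pos (two_pos.trans_le hk)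
  have hM : 0 < M := hbdd.pos (one_le_two.trans hk) hsupp
  have hB : 0 < qB k P := qB_pos hbdd hk hsupp ⟨c, hc⟩
  have hp : 0 < qpmin k P := qpmin_pos hbdd hk hsupp ⟨c, hc⟩
  have ht : 4 * M * dist c c' / qB k P ≤ r0 := by
    rw [le_div_iff₀ (by positivity)] at hdist
    rw [div_le_iff₀ hB]
    linarith
  have hgrowth := qrisk_add_sum_le hbdd.memLp_two hbdd.ae_norm_le
    (norm_le_of_mem_qopt hbdd hk hsupp hc) (norm_le_of_mem_qopt hbdd hk hsupp hc') hB
    (fun _ _ => qB_le hc) (h.measure_nbd_eq_zero hc) (isBarycenter_of_mem_qopt hbdd.memLp_two hc)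
  have hboundary : P.real (cthickening (4 * M * dist c c' / qB k P) (nbd k c)) *
      (8 * M * dist c c') ≤ qpmin k P * (dist c c' / 2) ^ 2 :=
    calc _ ≤ qB k P * qpmin k P * (4 * M * dist c c' / qB k P) / (128 * M ^ 2) *
          (8 * M * dist c c') := by
          gcongr
          exact h.measureReal_cthickening_le hc (by positivity) ht
      _ = qpmin k P * (dist c c' / 2) ^ 2 := by field_simp; ring
  have hcoord (i : Fin k) : dist (c i) (c' i) ≤ dist c c' / 2 := by
    refine (sq_le_sq₀ dist_nonneg (by positivity)).1 (le_of_mul_le_mul_left ?_ hp)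
    calc qpmin k P * dist (c i) (c' i) ^ 2 ≤ P.real (vcell k c i) * ‖c i - c' i‖ ^ 2 := by
          rw [dist_eq_norm]
          gcongr
          exact qpmin_le hc i
      _ ≤ ∑ i, P.real (vcell k c i) * ‖c i - c' i‖ ^ 2 :=
          Finset.single_le_sum (f := fun i => P.real (vcell k c i) * ‖c i - c' i‖ ^ 2)
            (fun i _ => by positivity) (Finset.mem_univ i)
      _ ≤ qpmin k P * (dist c c' / 2) ^ 2 := by linarith [hc' c]
  have hhalf : dist c c' ≤ dist c c' / 2 := (dist_pi_le_iff (by positivity)).2 hcoord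
  exact dist_le_zero.1 (by linarith)

end Margin

theorem stmt2_general [BorelSpace H] [SecondCountableTopology H] (k : ℕ) (hk : 2 ≤ k)
    (P : Measure H) [IsFiniteMeasure P] (M : ℝ) (hsupp : suppGT P k) (r0 : ℝ)
    (hmargin : margin k P M r0) : (qopt k P).Finite := by
  rcases (qopt k P).eq_empty_or_nonempty with hempty | hne
  · exact hempty ▸ Set.finite_empty
  have hbdd : mbounded P M := hmargin.2.1
  have hM : 0 < M := hbdd.pos (one_le_two.trans hk) hsupp
  have hB : 0 < qB k P := qB_pos hbdd hk hsupp hne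
  have hr0 : 0 < r0 := hmargin.1
  have hbounded : TotallyBounded (qopt k P) :=
    totallyBounded_qopt hbdd.memLp_two (qpmin_pos hbdd hk hsupp hne)
  exact finite_of_totallyBounded_of_eq_of_dist_lt (ε := qB k P * r0 / (4 * M)) (by positivity)
    hbounded fun c hc c' hc' hdist => eq_of_mem_qopt_of_dist_le hk hsupp hmargin hc hc' hdist.le

/-- Proposition 2.2 (ii): under the margin condition, the set of optimal
codebooks is finite. -/
theorem stmt2 [BorelSpace H] [SecondCountableTopology H] [CompleteSpace H]
    (k : ℕ) (hk : 2 ≤ k) (P : Measure H) [IsProbabilityMeasure P]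
    (M : ℝ) (hM : 0 < M) (hsupp : suppGT P k) (hne : (qopt k P).Nonempty)
    (r0 : ℝ) (hmargin : margin k P M r0) :
    (qopt k P).Finite :=
  stmt2_general k hk P M hsupp r0 hmargin

end
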